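/- arXiv:2305.00102 — 6 statements merged into one kernel-verified Lean document; each statement's English description precedes it below -/
import Mathlib

section
/- Let I be an index set and, for each i ∈ I, let F_i and G_i be nonempty balanced words. For any two words X and Y, the following are equivalent: (i) X − Y lies in the two-sided ideal of 𝒜 generated by the set {F_iG_i − G_iF_i : i ∈ I}; (ii) there is a sequence of swaps between X and Y in which every swap is of type (F_i, G_i) for some i ∈ I. -/
/-!
The set of words is the free monoid on two letters, and `𝒜` is its monoid algebra. The
relation "joined by a sequence of admissible swaps" is a monoid congruence on words
(`swapCon`), so there is an algebra homomorphism `toQuotAlg` from `𝒜` to the monoid algebra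
`ℂ[M]` of the quotient monoid `M`, sending each word to the basis element of its class.
Its kernel is a two-sided ideal containing every `F i * G i - G i * F i`, hence the whole span.
So if `X - Y` lies in the span, then `X` and `Y` have the same image in `ℂ[M]`; since distinct
elements of `M` are distinct basis vectors, `X` and `Y` are joined by swaps.

Conversely, a single swap changes a word by `± W₁ (F i * G i - G i * F i) W₂`, an element of the
ideal, and a sequence of swaps telescopes.
-/

/-- A word is a finite sequence of letters; the letter `L` is `false`, the letter `R` is `true`. -/
abbrev Word := List Bool

/-- A word is balanced if it contains equally many `L`s and `R`s. -/
def BalancedWord (w : Word) : Prop := w.count true = w.count false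

/-- The element of the free `ℂ`-algebra on two generators corresponding to a word. -/
noncomputable def toA (w : Word) : FreeAlgebra ℂ Bool :=
  (w.map (FreeAlgebra.ι ℂ)).prod

/-- The set `S = {FG - GF : F, G nonempty balanced words}`. -/
def Sset : Set (FreeAlgebra ℂ Bool) :=
  {x | ∃ F G : Word, F ≠ [] ∧ G ≠ [] ∧ BalancedWord F ∧ BalancedWord G ∧
    x = toA F * toA G - toA G * toA F}

/-- The two-sided ideal `𝒥` generated by `S`. -/
noncomputable def Jideal : TwoSidedIdeal (FreeAlgebra ℂ Bool) := TwoSidedIdeal.span Sset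

/-- `X ∼ Y` iff `X - Y ∈ 𝒥`. -/
def WEquiv (X Y : Word) : Prop := toA X - toA Y ∈ Jideal

/-- Words `X` and `Y` are related by a swap of type `(F, G)`. -/
def SwapOfType (F G X Y : Word) : Prop :=
  ∃ W₁ W₂ : Word,
    (X = W₁ ++ F ++ G ++ W₂ ∧ Y = W₁ ++ G ++ F ++ W₂) ∨
    (X = W₁ ++ G ++ F ++ W₂ ∧ Y = W₁ ++ F ++ G ++ W₂)

/-- Words `X` and `Y` are related by a swap. -/
def RelatedBySwap (X Y : Word) : Prop :=
  ∃ F G : Word, F ≠ [] ∧ G ≠ [] ∧ BalancedWord F ∧ BalancedWord G ∧ SwapOfType F G X Y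

/-- The `k`-th elevation of a word: number of `R`s minus number of `L`s among the
first `k` letters. -/
def elev (w : Word) (k : ℕ) : ℤ :=
  ((w.take k).count true : ℤ) - ((w.take k).count false : ℤ)

/-- The elevation multiset `E(W) = {e_k(W) : 0 ≤ k ≤ n}`. -/
def elevMultiset (w : Word) : Multiset ℤ :=
  (Multiset.range (w.length + 1)).map (elev w)

/-- A word is prime if it is nonempty, balanced, and cannot be written as the
product of two nonempty balanced words. -/
def IsPrimeWord (w : Word) : Prop :=
  w ≠ [] ∧ BalancedWord w ∧
    ¬ ∃ u v : Word, u ≠ [] ∧ v ≠ [] ∧ BalancedWord u ∧ BalancedWord v ∧ w = u ++ v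

/-- An upper prime: a prime word with `e_k > 0` for `1 ≤ k ≤ n - 1`. -/
def UpperPrime (w : Word) : Prop :=
  IsPrimeWord w ∧ ∀ k, 1 ≤ k → k ≤ w.length - 1 → 0 < elev w k

/-- A lower prime: a prime word with `e_k < 0` for `1 ≤ k ≤ n - 1`. -/
def LowerPrime (w : Word) : Prop :=
  IsPrimeWord w ∧ ∀ k, 1 ≤ k → k ≤ w.length - 1 → elev w k < 0

/-- A word is reduced if it contains no contiguous subword `UD` with `U` an
upper prime and `D` a lower prime. -/
def Reduced (W : Word) : Prop :=
  ¬ ∃ U D W₁ W₂ : Word, UpperPrime U ∧ LowerPrime D ∧ W = W₁ ++ U ++ D ++ W₂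

/-- Alphabetical (lexicographic) order on words, with `L < R`. -/
def WordLt (X Y : Word) : Prop := List.Lex (· < ·) X Y

theorem toA_append (u v : Word) : toA (u ++ v) = toA u * toA v := by
  simp [toA]

theorem SwapOfType.symm {F G X Y : Word} (h : SwapOfType F G X Y) : SwapOfType F G Y X := by
  obtain ⟨a, b, h⟩ := h
  exact ⟨a, b, h.symm.imp And.symm And.symm⟩

theorem SwapOfType.append {F G X Y : Word} (u v : Word) (h : SwapOfType F G X Y) :
    SwapOfType F G (u ++ X ++ v) (u ++ Y ++ v) := by
  obtain ⟨a, b, ⟨rfl, rfl⟩ | ⟨rfl, rfl⟩⟩ := h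
  · exact ⟨u ++ a, b ++ v, Or.inl (by simp)⟩
  · exact ⟨u ++ a, b ++ v, Or.inr (by simp)⟩

/-- `SwapSeq F G X Y`: there is a sequence of swaps from `X` to `Y`, each of type `(F i, G i)`
for some `i`. -/
abbrev SwapSeq {I : Type} (F G : I → Word) : Word → Word → Prop :=
  Relation.ReflTransGen (fun Z₁ Z₂ => ∃ i : I, SwapOfType (F i) (G i) Z₁ Z₂)

theorem SwapSeq.symm {I : Type} {F G : I → Word} {X Y : Word} (h : SwapSeq F G X Y) :
    SwapSeq F G Y X := by
  induction h with
  | refl => exact .refl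
  | tail _ h ih => exact .head (h.imp fun _ => SwapOfType.symm) ih

theorem SwapSeq.append {I : Type} {F G : I → Word} {X Y : Word} (u v : Word)
    (h : SwapSeq F G X Y) : SwapSeq F G (u ++ X ++ v) (u ++ Y ++ v) :=
  Relation.ReflTransGen.lift (fun Z => u ++ Z ++ v)
    (fun _ _ h => h.imp fun _ => SwapOfType.append u v) _ _ h

/-- The relation `SwapSeq F G` as a congruence on the monoid of words. Words are identified with
elements of `FreeMonoid Bool`, whose product is concatenation. -/
def swapCon {I : Type} (F G : I → Word) : Con (FreeMonoid Bool) where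
  r X Y := SwapSeq F G X.toList Y.toList
  iseqv := ⟨fun _ => .refl, SwapSeq.symm, Relation.ReflTransGen.trans⟩
  mul' {w x y z} h₁ h₂ := by
    have h₃ := SwapSeq.append [] y.toList h₁
    have h₄ := SwapSeq.append x.toList [] h₂
    simp only [List.nil_append, List.append_nil] at h₃ h₄
    simp only [FreeMonoid.toList_mul]
    exact h₃.trans h₄

/-- The class of a word modulo `swapCon F G`. -/
def swapClass {I : Type} (F G : I → Word) (X : Word) : (swapCon F G).Quotient :=
  ((FreeMonoid.ofList X : FreeMonoid Bool) : (swapCon F G).Quotient)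

theorem swapClass_eq_iff {I : Type} {F G : I → Word} {X Y : Word} :
    swapClass F G X = swapClass F G Y ↔ SwapSeq F G X Y :=
  (swapCon F G).eq

/-- The algebra homomorphism from `𝒜` to the monoid algebra of the quotient monoid, sending
each letter to its class. -/
noncomputable def toQuotAlg {I : Type} (F G : I → Word) :
    FreeAlgebra ℂ Bool →ₐ[ℂ] MonoidAlgebra ℂ (swapCon F G).Quotient :=
  FreeAlgebra.lift ℂ fun b => MonoidAlgebra.of ℂ _ (swapClass F G [b])

theorem toQuotAlg_toA {I : Type} (F G : I → Word) (X : Word) :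
    toQuotAlg F G (toA X) = MonoidAlgebra.of ℂ _ (swapClass F G X) := by
  induction X with
  | nil =>
    have h : swapClass F G [] = 1 := rfl
    rw [h, map_one]
    simp [toA]
  | cons b X ih =>
    have h : swapClass F G (b :: X) = swapClass F G [b] * swapClass F G X := rfl
    have h' : toA (b :: X) = FreeAlgebra.ι ℂ b * toA X := by simp [toA]
    rw [h, map_mul, h', map_mul, ih]
    congr 1
    exact FreeAlgebra.lift_ι_apply _ _

/-- The kernel of `toQuotAlg F G` contains the ideal generated by the `F i * G i - G i * F i`. -/
theorem toQuotAlg_eq_zero {I : Type} (F G : I → Word) {a : FreeAlgebra ℂ Bool}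
    (ha : a ∈ TwoSidedIdeal.span
      {x | ∃ i : I, x = toA (F i) * toA (G i) - toA (G i) * toA (F i)}) :
    toQuotAlg F G a = 0 := by
  rw [← TwoSidedIdeal.mem_ker]
  refine TwoSidedIdeal.mem_span_iff.1 ha _ ?_
  rintro _ ⟨i, rfl⟩
  have h : swapClass F G (F i ++ G i) = swapClass F G (G i ++ F i) :=
    swapClass_eq_iff.2 (.single ⟨i, [], [], Or.inl (by simp)⟩)
  rw [SetLike.mem_coe, TwoSidedIdeal.mem_ker, ← toA_append, ← toA_append, map_sub,
    toQuotAlg_toA, toQuotAlg_toA, h, sub_self]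

/-- A swap of type `(F, G)` changes a word by an element of any ideal containing `FG - GF`. -/
theorem SwapOfType.sub_mem {J : TwoSidedIdeal (FreeAlgebra ℂ Bool)} {F G X Y : Word}
    (hJ : toA F * toA G - toA G * toA F ∈ J) (h : SwapOfType F G X Y) :
    toA X - toA Y ∈ J := by
  obtain ⟨a, b, h⟩ := h
  have key : toA (a ++ F ++ G ++ b) - toA (a ++ G ++ F ++ b) ∈ J := by
    have := J.mul_mem_right _ (toA b) (J.mul_mem_left (toA a) _ hJ)
    simpa only [toA_append, mul_sub, sub_mul, mul_assoc] using this
  rcases h with ⟨rfl, rfl⟩ | ⟨rfl, rfl⟩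
  · exact key
  · simpa using J.neg_mem key

/-- membership in the ideal generated by `{F_iG_i - G_iF_i}` is
equivalent to existence of a sequence of swaps of types `(F_i, G_i)`. -/
theorem stmt0 {I : Type} (F G : I → Word)
    (hF : ∀ i, F i ≠ [] ∧ BalancedWord (F i))
    (hG : ∀ i, G i ≠ [] ∧ BalancedWord (G i)) (X Y : Word) :
    toA X - toA Y ∈ TwoSidedIdeal.span
        {x | ∃ i : I, x = toA (F i) * toA (G i) - toA (G i) * toA (F i)} ↔
      Relation.ReflTransGen (fun Z₁ Z₂ => ∃ i : I, SwapOfType (F i) (G i) Z₁ Z₂) X Y := by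
  constructor
  · intro h
    have h0 := toQuotAlg_eq_zero F G h
    rw [map_sub, sub_eq_zero, toQuotAlg_toA, toQuotAlg_toA] at h0
    exact swapClass_eq_iff.1 (MonoidAlgebra.of_injective h0)
  · intro h
    induction h with
    | refl => simp
    | tail _ h ih =>
      obtain ⟨i, h⟩ := h
      have := TwoSidedIdeal.add_mem _ ih (h.sub_mem (TwoSidedIdeal.subset_span ⟨i, rfl⟩))
      simpa using this
end

section
/- Every nonempty balanced word W can be written uniquely as a concatenation W = P₁P₂⋯P_k, where k is a positive integer and P_i is a prime word for 1 ≤ i ≤ k. -/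
theorem BalancedWord.right_of_append {u v : Word} (huv : BalancedWord (u ++ v))
    (hu : BalancedWord u) : BalancedWord v := by
  unfold BalancedWord at *
  simp only [List.count_append] at huv
  omega

theorem exists_prime_factorization (W : Word) (hne : W ≠ []) (hbal : BalancedWord W) :
    ∃ l : List Word, l ≠ [] ∧ (∀ P ∈ l, IsPrimeWord P) ∧ W = l.flatten := by
  induction hn : W.length using Nat.strong_induction_on generalizing W with
  | _ n ih =>
    by_cases hp : IsPrimeWord W
    · exact ⟨[W], by simp, by simpa using hp, by simp⟩
    · have hsplit : ∃ u v : Word, u ≠ [] ∧ v ≠ [] ∧ BalancedWord u ∧ BalancedWord v ∧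
          W = u ++ v := by
        by_contra h
        exact hp ⟨hne, hbal, h⟩
      obtain ⟨u, v, hu, hv, hbu, hbv, rfl⟩ := hsplit
      have hlu := List.length_pos_of_ne_nil hu
      have hlv := List.length_pos_of_ne_nil hv
      rw [List.length_append] at hn
      obtain ⟨l₁, hl₁, hp₁, rfl⟩ := ih u.length (by omega) u hu hbu rfl
      obtain ⟨l₂, -, hp₂, rfl⟩ := ih v.length (by omega) v hv hbv rfl
      refine ⟨l₁ ++ l₂, by simp [hl₁], fun P hP => ?_, by simp⟩
      rcases List.mem_append.1 hP with h | h
      · exact hp₁ P h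
      · exact hp₂ P h

/-- The prime words form a prefix code. -/
theorem IsPrimeWord.eq_of_prefix {P Q : Word} (hP : IsPrimeWord P) (hQ : IsPrimeWord Q)
    (h : P <+: Q) : P = Q := by
  obtain ⟨t, rfl⟩ := h
  by_cases ht : t = []
  · simp [ht]
  · exact absurd ⟨P, t, hP.1, ht, hP.2.1, hQ.2.1.right_of_append hP.2.1, rfl⟩ hQ.2.2

theorem prime_factorization_unique (l m : List Word) (hl : ∀ P ∈ l, IsPrimeWord P)
    (hm : ∀ P ∈ m, IsPrimeWord P) (h : l.flatten = m.flatten) : l = m := by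
  induction l generalizing m with
  | nil =>
    cases m with
    | nil => rfl
    | cons Q m =>
      have hQ := (hm Q (by simp)).1
      simp_all
  | cons P l ih =>
    have hP := hl P (by simp)
    cases m with
    | nil =>
      have := hP.1
      simp_all
    | cons Q m =>
      have hQ := hm Q (by simp)
      rw [List.flatten_cons, List.flatten_cons] at h
      have hPQ : P = Q := by
        -- `P` and `Q` are prefixes of the same word, so one is a prefix of the other.
        rcases List.prefix_or_prefix_of_prefix (List.prefix_append P l.flatten)
          (h ▸ List.prefix_append Q m.flatten) with hpre | hpre
        · exact hP.eq_of_prefix hQ hpre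
        · exact (hQ.eq_of_prefix hP hpre).symm
      subst hPQ
      rw [ih m (fun R hR => hl R (by simp [hR])) (fun R hR => hm R (by simp [hR]))
        (List.append_cancel_left h)]

/-- every nonempty balanced word factors uniquely as a
concatenation of a nonempty list of prime words. -/
theorem stmt3 (W : Word) (hne : W ≠ []) (hbal : BalancedWord W) :
    ∃! l : List Word, l ≠ [] ∧ (∀ P ∈ l, IsPrimeWord P) ∧ W = l.flatten := by
  obtain ⟨l, hl, hp, hW⟩ := exists_prime_factorization W hne hbal
  exact ⟨l, ⟨hl, hp, hW⟩, fun m ⟨_, hm, hWm⟩ =>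
    prime_factorization_unique m l hm hp (hWm.symm.trans hW)⟩
end

section
/- The set S' = {PQ − QP : P and Q are prime words} generates the two-sided ideal 𝒥, i.e., the two-sided ideal of 𝒜 generated by S' equals 𝒥. -/
/-- A multiplicative property of nonempty balanced words may be checked on prime words, since a
nonempty balanced word that is not prime splits into two shorter such words. -/
theorem BalancedWord.primeInduction {p : Word → Prop} (prime : ∀ P, IsPrimeWord P → p P)
    (append : ∀ u v, p u → p v → p (u ++ v)) (w : Word) (hne : w ≠ []) (hw : BalancedWord w) :
    p w := by
  induction hn : w.length using Nat.strong_induction_on generalizing w with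
  | _ n ih =>
    subst hn
    by_cases h : IsPrimeWord w
    · exact prime w h
    · obtain ⟨u, v, hu, hv, hbu, hbv, rfl⟩ :
          ∃ u v : Word, u ≠ [] ∧ v ≠ [] ∧ BalancedWord u ∧ BalancedWord v ∧ w = u ++ v := by
        by_contra hdec
        exact h ⟨hne, hw, hdec⟩
      have hlu := List.length_pos_of_ne_nil hu
      have hlv := List.length_pos_of_ne_nil hv
      exact append u v (ih _ (by simpa using hlv) u hu hbu rfl)
        (ih _ (by simpa using hlu) v hv hbv rfl)

theorem commutator_mul_mem {A : Type*} [Ring A] (I : TwoSidedIdeal A) {a b c : A}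
    (ha : a * c - c * a ∈ I) (hb : b * c - c * b ∈ I) : (a * b) * c - c * (a * b) ∈ I := by
  have h : (a * b) * c - c * (a * b) = a * (b * c - c * b) + (a * c - c * a) * b := by
    noncomm_ring
  rw [h]
  exact I.add_mem (I.mul_mem_left _ _ hb) (I.mul_mem_right _ _ ha)

/-- the set `S' = {PQ - QP : P, Q prime}` generates `𝒥`. -/
theorem stmt4 :
    TwoSidedIdeal.span
        {x | ∃ P Q : Word, IsPrimeWord P ∧ IsPrimeWord Q ∧
          x = toA P * toA Q - toA Q * toA P} = Jideal := by
  apply le_antisymm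
  · apply TwoSidedIdeal.span_mono
    rintro x ⟨P, Q, hP, hQ, rfl⟩
    exact ⟨P, Q, hP.1, hQ.1, hP.2.1, hQ.2.1, rfl⟩
  · rw [Jideal, TwoSidedIdeal.span_le]
    rintro x ⟨F, G, hF, hG, hbF, hbG, rfl⟩
    set I := TwoSidedIdeal.span {x | ∃ P Q : Word, IsPrimeWord P ∧ IsPrimeWord Q ∧
      x = toA P * toA Q - toA Q * toA P}
    refine BalancedWord.primeInduction (p := fun F => toA F * toA G - toA G * toA F ∈ I)
      (fun P hP => ?_) (fun u v hu hv => ?_) F hF hbF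
    · -- Swapping the factors negates the commutator, so that the factor to decompose is on the left.
      rw [← neg_sub]
      apply I.neg_mem
      refine BalancedWord.primeInduction (p := fun G => toA G * toA P - toA P * toA G ∈ I)
        (fun Q hQ => ?_) (fun u v hu hv => ?_) G hG hbG
      · exact TwoSidedIdeal.subset_span ⟨Q, P, hQ, hP, rfl⟩
      · simp only [toA_append]
        exact commutator_mul_mem I hu hv
    · simp only [toA_append]
      exact commutator_mul_mem I hu hv
end

section
/- If X and Y are balanced words with X ∼ Y, then E(X) = E(Y), i.e., X and Y have the same elevation multiset. -/
/-- The monoid algebra of multisets of integers, i.e. the polynomial ring in variables `x_i`,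
`i ∈ ℤ`, with monomials indexed by their multisets of variables. -/
abbrev ElevAlg : Type := AddMonoidAlgebra ℂ (Multiset ℤ)

/-- The elevation step of a letter: `1` for `R`, `-1` for `L`. -/
def letterStep (a : Bool) : ℤ := if a then 1 else -1

/-- The total elevation of a word. -/
def totalElev (w : Word) : ℤ := (w.count true : ℤ) - (w.count false : ℤ)

/-- The monomial `∏_{i ∈ m} x_i`. -/
noncomputable def elevMono (m : Multiset ℤ) : ElevAlg := AddMonoidAlgebra.single m 1

/-- The operator `f ↦ (i ↦ x_i f(i + s))` by which a letter of step `s` acts. -/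
noncomputable def letterOp (a : Bool) : Module.End ℂ (ℤ → ElevAlg) where
  toFun f i := elevMono {i} * f (i + letterStep a)
  map_add' f g := by
    funext i
    simp [mul_add]
  map_smul' c f := by
    funext i
    simp

/-- The representation of the free algebra on functions `ℤ → ElevAlg` given by `letterOp`. -/
noncomputable def elevRep : FreeAlgebra ℂ Bool →ₐ[ℂ] Module.End ℂ (ℤ → ElevAlg) :=
  FreeAlgebra.lift ℂ letterOp

lemma toA_nil : toA [] = 1 := rfl

lemma toA_cons (a : Bool) (w : Word) : toA (a :: w) = FreeAlgebra.ι ℂ a * toA w := by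
  simp [toA]

lemma elevRep_cons (a : Bool) (w : Word) (f : ℤ → ElevAlg) (i : ℤ) :
    elevRep (toA (a :: w)) f i = elevMono {i} * elevRep (toA w) f (i + letterStep a) := by
  simp [toA_cons, elevRep, letterOp]

lemma totalElev_cons (a : Bool) (w : Word) :
    totalElev (a :: w) = letterStep a + totalElev w := by
  cases a <;> simp [totalElev, letterStep] <;> ring

lemma elevMono_add (m n : Multiset ℤ) : elevMono (m + n) = elevMono m * elevMono n := by
  simp [elevMono, AddMonoidAlgebra.single_mul_single]

lemma elevMono_injective : Function.Injective elevMono := fun _ _ h =>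
  Finsupp.single_left_injective one_ne_zero (congrArg AddMonoidAlgebra.coeff h)

/-- A word acts as a shift by its total elevation followed by a multiplication operator. -/
lemma exists_coeff (w : Word) : ∃ c : ℤ → ElevAlg, ∀ (f : ℤ → ElevAlg) (i : ℤ),
    elevRep (toA w) f i = c i * f (i + totalElev w) := by
  induction w with
  | nil => exact ⟨fun _ => 1, fun f i => by simp [toA_nil, totalElev]⟩
  | cons a w ih =>
    obtain ⟨c, hc⟩ := ih
    refine ⟨fun i => elevMono {i} * c (i + letterStep a), fun f i => ?_⟩
    rw [elevRep_cons, hc, totalElev_cons, mul_assoc, add_assoc]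

lemma totalElev_of_balanced {w : Word} (h : BalancedWord w) : totalElev w = 0 := by
  simp [totalElev, show w.count true = w.count false from h]

lemma elevRep_commute {F G : Word} (hF : BalancedWord F) (hG : BalancedWord G) :
    elevRep (toA F * toA G - toA G * toA F) = 0 := by
  obtain ⟨c, hc⟩ := exists_coeff F
  obtain ⟨d, hd⟩ := exists_coeff G
  refine LinearMap.ext fun f => funext fun i => ?_
  simp only [map_sub, map_mul, LinearMap.sub_apply, Module.End.mul_apply, Pi.sub_apply, hc, hd,
    totalElev_of_balanced hF, totalElev_of_balanced hG, add_zero, LinearMap.zero_apply,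
    Pi.zero_apply]
  ring

lemma elevRep_eq_zero {x : FreeAlgebra ℂ Bool} (hx : x ∈ Jideal) : elevRep x = 0 := by
  have hle : Jideal ≤ TwoSidedIdeal.ker elevRep := by
    refine TwoSidedIdeal.span_le.2 ?_
    rintro _ ⟨F, G, -, -, hF, hG, rfl⟩
    exact (TwoSidedIdeal.mem_ker _).2 (elevRep_commute hF hG)
  exact (TwoSidedIdeal.mem_ker _).1 (hle hx)

lemma elev_cons_succ (a : Bool) (w : Word) (k : ℕ) :
    elev (a :: w) (k + 1) = letterStep a + elev w k := by
  simpa [totalElev, elev] using totalElev_cons a (w.take k)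

lemma elevMultiset_cons (a : Bool) (w : Word) :
    elevMultiset (a :: w) = {0} + (elevMultiset w).map (letterStep a + ·) := by
  have hrange : Multiset.range (w.length + 1 + 1) =
      {0} + (Multiset.range (w.length + 1)).map Nat.succ := by
    simp only [Multiset.range, Multiset.map_coe, List.range_succ_eq_map (n := w.length + 1)]
    rfl
  have h0 : elev (a :: w) 0 = 0 := by simp [elev]
  rw [elevMultiset, List.length_cons, hrange, Multiset.map_add, Multiset.map_singleton, h0,
    elevMultiset, Multiset.map_map, Multiset.map_map]
  simp only [Function.comp_def, Nat.succ_eq_add_one, elev_cons_succ]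

/-- Acting on `i ↦ x_i`, a word produces the monomial of its elevations; the variable of the final
elevation is contributed by the function itself. -/
lemma elevRep_toA_probe (w : Word) (i : ℤ) :
    elevRep (toA w) (fun j => elevMono {j}) i = elevMono ((elevMultiset w).map (i + ·)) := by
  induction w generalizing i with
  | nil => simp [toA_nil, elevMultiset, elev]
  | cons a w ih =>
    rw [elevRep_cons, ih, ← elevMono_add, elevMultiset_cons]
    simp [Multiset.map_map, add_assoc]

/-- equivalent balanced words have the same elevation multiset. -/
theorem stmt5 (X Y : Word) (hX : BalancedWord X) (hY : BalancedWord Y)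
    (h : WEquiv X Y) : elevMultiset X = elevMultiset Y := by
  have h0 : elevRep (toA X) = elevRep (toA Y) := by
    simpa [sub_eq_zero] using elevRep_eq_zero h
  have h1 := elevRep_toA_probe X 0
  rw [h0, elevRep_toA_probe] at h1
  simpa using (elevMono_injective h1).symm
end

section
/- The set S'' = {UD − DU : U is an upper prime, D is a lower prime} generates the two-sided ideal 𝒥, i.e., the two-sided ideal of 𝒜 generated by S'' equals 𝒥. -/
/-- The height of a word relative to the letter `b`: each `b` counts `+1`, each other letter `-1`.
For `b = true` this is the final elevation, for `b = false` its negative. -/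
def height (b : Bool) (w : Word) : ℤ := (w.count b : ℤ) - (w.count (!b) : ℤ)

lemma height_append (b : Bool) (u v : Word) :
    height b (u ++ v) = height b u + height b v := by
  simp only [height, List.count_append]; push_cast; ring

lemma height_singleton_self (b : Bool) : height b [b] = 1 := by
  cases b <;> simp [height]

lemma height_singleton_not (b : Bool) : height b [!b] = -1 := by
  cases b <;> simp [height]

lemma balanced_iff_height (b : Bool) (w : Word) : BalancedWord w ↔ height b w = 0 := by
  cases b <;> simp only [BalancedWord, height, Bool.not_true, Bool.not_false] <;> omega

/-- A prime word beginning with `b` stays strictly on the `b`-side of elevation `0` between its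
endpoints. -/
lemma prime_height_pos {b : Bool} {t : Word} (h : IsPrimeWord (b :: t)) (k : ℕ) (hk : 1 ≤ k)
    (hk' : k < (b :: t).length) : 0 < height b ((b :: t).take k) := by
  induction k, hk using Nat.le_induction with
  | base => simp [height_singleton_self]
  | succ k hk ih =>
    have hpos := ih (by omega)
    -- An intermediate height `0` would split the word into two balanced factors.
    have hne : height b ((b :: t).take (k + 1)) ≠ 0 := by
      intro h0
      have htot := (balanced_iff_height b _).1 h.2.1
      rw [← List.take_append_drop (k + 1) (b :: t), height_append] at htot
      refine h.2.2 ⟨(b :: t).take (k + 1), (b :: t).drop (k + 1), by simp, ?_,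
        (balanced_iff_height b _).2 h0, (balanced_iff_height b _).2 (by omega),
        (List.take_append_drop _ _).symm⟩
      intro hd
      have := congrArg List.length hd
      rw [List.length_drop, List.length_nil] at this
      omega
    rw [List.take_succ_eq_append_getElem (by omega), height_append] at hne ⊢
    have hx : ∀ x : Bool, height b [x] = 1 ∨ height b [x] = -1 := by
      intro x; cases b <;> cases x <;> simp [height]
    rcases hx ((b :: t)[k]) with h1 | h1 <;> omega

lemma upperPrime_of_prime {t : Word} (h : IsPrimeWord (true :: t)) : UpperPrime (true :: t) := by
  refine ⟨h, fun k hk hk' => ?_⟩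
  have := prime_height_pos h k hk (by simp at hk' ⊢; omega)
  simpa [height, elev] using this

lemma lowerPrime_of_prime {t : Word} (h : IsPrimeWord (false :: t)) : LowerPrime (false :: t) := by
  refine ⟨h, fun k hk hk' => ?_⟩
  have := prime_height_pos h k hk (by simp at hk' ⊢; omega)
  simp only [height, elev, Bool.not_false] at this ⊢
  omega

/-- A prime word ends with the letter opposite to its first one: just before the last letter the
height is positive, and it ends at `0`. -/
lemma prime_shape {b : Bool} {t : Word} (h : IsPrimeWord (b :: t)) :
    ∃ A : Word, BalancedWord A ∧ b :: t = [b] ++ A ++ [!b] := by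
  have htot := (balanced_iff_height b _).1 h.2.1
  rcases List.eq_nil_or_concat' t with rfl | ⟨A, x, rfl⟩
  · rw [height_singleton_self] at htot; omega
  · have hpos := prime_height_pos h (A.length + 1) (by omega) (by simp)
    rw [show (b :: (A ++ [x])).take (A.length + 1) = [b] ++ A by simp] at hpos
    rw [show b :: (A ++ [x]) = [b] ++ A ++ [x] by simp, height_append] at htot
    obtain rfl | rfl : x = b ∨ x = !b := by cases x <;> cases b <;> simp
    · rw [height_singleton_self] at htot; omega
    · refine ⟨A, (balanced_iff_height b _).2 ?_, by simp⟩
      rw [height_append, height_singleton_self, height_singleton_not] at htot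
      omega

/-- A monoid homomorphism `f` on words that makes upper primes commute with lower primes makes all
balanced words commute. -/
lemma commute_of_balanced {M : Type*} [Monoid M] (f : Word → M) (h1 : f [] = 1)
    (hf : ∀ u v, f (u ++ v) = f u * f v)
    (hUD : ∀ U D, UpperPrime U → LowerPrime D → Commute (f U) (f D)) (n : ℕ) :
    ∀ F G : Word, F.length + G.length = n → BalancedWord F → BalancedWord G →
      Commute (f F) (f G) := by
  induction n using Nat.strong_induction_on with
  | _ n ih =>
  intro F G hn hF hG
  have key : ∀ F G : Word, F.length + G.length < n → BalancedWord F → BalancedWord G →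
      Commute (f F) (f G) := fun F G h => ih _ h F G rfl
  by_cases hF0 : F = []
  · rw [hF0, h1]; exact Commute.one_left _
  by_cases hG0 : G = []
  · rw [hG0, h1]; exact Commute.one_right _
  by_cases hFs : ∃ u v : Word, u ≠ [] ∧ v ≠ [] ∧ BalancedWord u ∧ BalancedWord v ∧ F = u ++ v
  · obtain ⟨u, v, hu, hv, hbu, hbv, rfl⟩ := hFs
    have := List.length_pos_iff.2 hu
    have := List.length_pos_iff.2 hv
    rw [List.length_append] at hn
    rw [hf]
    exact (key u G (by omega) hbu hG).mul_left (key v G (by omega) hbv hG)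
  by_cases hGs : ∃ u v : Word, u ≠ [] ∧ v ≠ [] ∧ BalancedWord u ∧ BalancedWord v ∧ G = u ++ v
  · obtain ⟨u, v, hu, hv, hbu, hbv, rfl⟩ := hGs
    have := List.length_pos_iff.2 hu
    have := List.length_pos_iff.2 hv
    rw [List.length_append] at hn
    rw [hf]
    exact (key F u (by omega) hF hbu).mul_right (key F v (by omega) hF hbv)
  have hFp : IsPrimeWord F := ⟨hF0, hF, hFs⟩
  have hGp : IsPrimeWord G := ⟨hG0, hG, hGs⟩
  obtain ⟨b, s, rfl⟩ := List.exists_cons_of_ne_nil hF0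
  obtain ⟨c, t, rfl⟩ := List.exists_cons_of_ne_nil hG0
  by_cases hbc : c = b
  · subst hbc
    obtain ⟨A, hA, hFA⟩ := prime_shape hFp
    obtain ⟨B, hB, hGB⟩ := prime_shape hGp
    rw [hFA, hGB] at hn ⊢
    simp only [List.length_append, List.length_singleton] at hn
    have hlr : BalancedWord ([!c] ++ [c]) := by cases c <;> simp [BalancedWord]
    have hAB := key A B (by omega) hA hB
    have hAx := key A _ (by simp; omega) hA hlr
    have hBx := key B _ (by simp; omega) hB hlr
    rw [hf] at hAx hBx
    simp only [hf]
    -- Move `l * r` to the left past `a`, exchange `a` and `d`, then move `l * r` right past `d`.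
    generalize f [c] = r, f [!c] = l, f A = a, f B = d at *
    change r * a * l * (r * d * l) = r * d * l * (r * a * l)
    calc r * a * l * (r * d * l) = r * (a * (l * r)) * d * l := by simp only [mul_assoc]
      _ = r * (l * r) * (a * d) * l := by rw [hAx.eq]; simp only [mul_assoc]
      _ = r * ((l * r) * d) * a * l := by rw [hAB.eq]; simp only [mul_assoc]
      _ = r * d * l * (r * a * l) := by rw [← hBx.eq]; simp only [mul_assoc]
  · cases b <;> cases c
    · exact absurd rfl hbc
    · exact (hUD _ _ (upperPrime_of_prime hGp) (lowerPrime_of_prime hFp)).symm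
    · exact hUD _ _ (upperPrime_of_prime hFp) (lowerPrime_of_prime hGp)
    · exact absurd rfl hbc

/-- the set `S'' = {UD - DU : U upper prime, D lower prime}`
generates `𝒥`. -/
theorem stmt10 :
    TwoSidedIdeal.span
        {x | ∃ U D : Word, UpperPrime U ∧ LowerPrime D ∧
          x = toA U * toA D - toA D * toA U} = Jideal := by
  apply le_antisymm
  · apply TwoSidedIdeal.span_mono
    rintro x ⟨U, D, hU, hD, rfl⟩
    exact ⟨U, D, hU.1.1, hD.1.1, hU.1.2.1, hD.1.2.1, rfl⟩
  · set I := TwoSidedIdeal.span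
        {x | ∃ U D : Word, UpperPrime U ∧ LowerPrime D ∧
          x = toA U * toA D - toA D * toA U} with hI
    refine TwoSidedIdeal.span_le.2 ?_
    rintro x ⟨F, G, -, -, hF, hG, rfl⟩
    -- Membership in `I` of a commutator is commutation in the quotient ring `𝒜 / I`.
    have hmem : ∀ X Y : Word, toA X * toA Y - toA Y * toA X ∈ I ↔
        Commute (I.ringCon.mk' (toA X)) (I.ringCon.mk' (toA Y)) := by
      intro X Y
      rw [← TwoSidedIdeal.rel_iff, commute_iff_eq, ← map_mul, ← map_mul]
      exact (RingCon.eq _).symm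
    refine (hmem F G).2 (commute_of_balanced (fun w => I.ringCon.mk' (toA w)) ?_ ?_ ?_ _
      F G rfl hF hG)
    · simp [toA]
    · intro u v
      simp [toA]
    · intro U D hU hD
      exact (hmem U D).1 (TwoSidedIdeal.subset_span ⟨U, D, hU, hD, rfl⟩)
end

section
/- Let X be a word that is minimal in its ∼-equivalence class with respect to alphabetical order, i.e., X ≤ Y for every word Y with Y ∼ X. Then X is reduced. -/
/-- Swapping two adjacent nonempty balanced factors does not change the class of a word. -/
theorem wEquiv_swap {F G : Word} (hF : F ≠ []) (hG : G ≠ []) (bF : BalancedWord F)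
    (bG : BalancedWord G) (W₁ W₂ : Word) :
    WEquiv (W₁ ++ F ++ G ++ W₂) (W₁ ++ G ++ F ++ W₂) := by
  have hS : toA F * toA G - toA G * toA F ∈ Jideal :=
    TwoSidedIdeal.subset_span ⟨F, G, hF, hG, bF, bG, rfl⟩
  have h := Jideal.mul_mem_right _ (toA W₂) (Jideal.mul_mem_left (toA W₁) _ hS)
  unfold WEquiv
  convert h using 1
  simp only [toA_append]
  noncomm_ring

theorem BalancedWord.two_le_length {w : Word} (hne : w ≠ []) (hb : BalancedWord w) :
    2 ≤ w.length := by
  match w, hne with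
  | [a], _ => cases a <;> simp [BalancedWord] at hb
  | _ :: _ :: _, _ => simp

theorem UpperPrime.exists_cons {w : Word} (h : UpperPrime w) : ∃ t, w = true :: t := by
  obtain ⟨⟨hne, hb, -⟩, he⟩ := h
  have hl := BalancedWord.two_le_length hne hb
  have h1 := he 1 le_rfl (by omega)
  match w, hne with
  | true :: t, _ => exact ⟨t, rfl⟩
  | false :: t, _ => simp [elev] at h1

theorem LowerPrime.exists_cons {w : Word} (h : LowerPrime w) : ∃ t, w = false :: t := by
  obtain ⟨⟨hne, hb, -⟩, he⟩ := h
  have hl := BalancedWord.two_le_length hne hb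
  have h1 := he 1 le_rfl (by omega)
  match w, hne with
  | false :: t, _ => exact ⟨t, rfl⟩
  | true :: t, _ => simp [elev] at h1

/-- After a common prefix, a word continuing with `R` is not alphabetically smaller than one
continuing with `L`. -/
theorem not_wordLt_append (W s t : Word) : ¬ WordLt (W ++ true :: s) (W ++ false :: t) := by
  induction W with
  | nil =>
    intro h
    cases h with
    | rel h => exact absurd h (by decide)
  | cons a W ih =>
    intro h
    cases h with
    | cons h => exact ih h
    | rel h => exact lt_irrefl a h

/-- a word minimal in its equivalence class with respect to
alphabetical order is reduced. -/
theorem stmt17 (X : Word)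
    (hmin : ∀ Y : Word, WEquiv Y X → X = Y ∨ WordLt X Y) :
    Reduced X := by
  rintro ⟨U, D, W₁, W₂, hU, hD, rfl⟩
  have hY := hmin _ (wEquiv_swap hD.1.1 hU.1.1 hD.1.2.1 hU.1.2.1 W₁ W₂)
  obtain ⟨u, rfl⟩ := hU.exists_cons
  obtain ⟨d, rfl⟩ := hD.exists_cons
  simp only [List.append_assoc, List.cons_append] at hY
  rcases hY with h | h
  · simp at h
  · exact not_wordLt_append _ _ _ h
end
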